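/- Conserved quantities as quantum determinants with a defect: under these hypotheses, for every 0 ≤ m ≤ r+1 and every n ∈ ℤ, C_m·M_{r+1,n} = Σ_v c_v(q)·∏_{i=1}^{r+1} M_{n+e_i(m)−v_i} (ordered product over i = 1,…,r+1), where the finite sum runs over the exponent vectors v ∈ ℤ^{r+1} in the support of Δ_q(u_1,…,u_{r+1}) with coefficients c_v ∈ ℤ[q], and e_i(m) := 1 if i ≤ m and e_i(m) := 0 otherwise. In particular, taking n = 0 (where M_{r+1,0} = Δ), C_m = (Σ_v c_v(q)·∏_{i=1}^{r+1} M_{e_i(m)−v_i})·Δ^{−1}. -/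

import Mathlib

/-- ξ_{α,n} := M_{α,n} · M_{α,n+1}⁻¹ -/
def xiv {R : Type*} [Ring R] (M Mi : ℕ → ℤ → R) (α : ℕ) (n : ℤ) : R :=
  M α n * Mi α (n + 1)

/-- ξ_{α,n}⁻¹ = M_{α,n+1} · M_{α,n}⁻¹ -/
def xivInv {R : Type*} [Ring R] (M Mi : ℕ → ℤ → R) (α : ℕ) (n : ℤ) : R :=
  M α (n + 1) * Mi α n

/-- x_{α,n} := ξ_{α,n}⁻¹ · ξ_{α-1,n} -/
def xv {R : Type*} [Ring R] (M Mi : ℕ → ℤ → R) (α : ℕ) (n : ℤ) : R :=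
  xivInv M Mi α n * xiv M Mi (α - 1) n

/-- The Miura coefficient C_{m,n} = Σ_{r+1 ≥ α₁ > ⋯ > α_m ≥ 1}
∏_{j=1}^m x_{α_j, n+(r+1-α_j)-(j-1)} (ordered product, j increasing left to right). -/
def CMiura {R : Type*} [Ring R] (M Mi : ℕ → ℤ → R) (r : ℕ) (m : ℕ) (n : ℤ) : R :=
  ∑ S ∈ Finset.powersetCard m (Finset.Icc 1 (r + 1)),
    (((S.sort (· ≤ ·)).reverse.zipIdx).map
      (fun ji => xv M Mi ji.1 (n + ((r : ℤ) + 1 - (ji.1 : ℤ)) - (ji.2 : ℤ)))).prod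

/-- The set of pairs (a,b) with 1 ≤ a < b ≤ α (0-indexed as Fin α). -/
def qvPairs (α : ℕ) : Finset (Fin α × Fin α) :=
  Finset.univ.filter fun p => p.1 < p.2

/-- The exponent of u_i in the monomial of Δ_q(u₁,…,u_α) = ∏_{a<b} (1 - q·u_b·u_a⁻¹)
obtained by choosing the term -q·u_b·u_a⁻¹ exactly for the pairs (a,b) ∈ S. -/
def qvExp (α : ℕ) (S : Finset (Fin α × Fin α)) (i : Fin α) : ℤ :=
  ((S.filter fun p => p.2 = i).card : ℤ) - ((S.filter fun p => p.1 = i).card : ℤ)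


/-- q-commutation x y = q^k y x -/
def QC {R : Type*} [Ring R] (q : Rˣ) (k : ℤ) (x y : R) : Prop :=
  x * y = ((q ^ k : Rˣ) : R) * (y * x)

structure MSys {R : Type*} [Ring R] (q : Rˣ) (r : ℕ) (M Mi : ℕ → ℤ → R) : Prop where
  hq : ∀ x : R, (q : R) * x = x * (q : R)
  hr : 1 ≤ r
  hM0 : ∀ n : ℤ, M 0 n = 1
  hMtop : ∀ n : ℤ, M (r + 2) n = 0
  hL : ∀ (α : ℕ) (n : ℤ), α ≤ r + 1 → M α n * Mi α n = 1
  hR : ∀ (α : ℕ) (n : ℤ), α ≤ r + 1 → Mi α n * M α n = 1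
  hsys : ∀ (α : ℕ) (n : ℤ), 1 ≤ α → α ≤ r + 1 →
      (q : R) ^ α * M α (n + 1) * M α (n - 1) = M α n ^ 2 - M (α + 1) n * M (α - 1) n
  hext : ∀ (α β : ℕ) (n p : ℤ), α ≤ r + 1 → β ≤ r + 1 →
      |p| ≤ |(β : ℤ) - (α : ℤ)| + 1 →
      M α n * M β (n + p) = ((q ^ (p * ((min α β : ℕ) : ℤ)) : Rˣ) : R) * M β (n + p) * M α n

section QCsec
variable {R : Type*} [Ring R] {q : Rˣ}

theorem qz_central (hq : ∀ x : R, (q : R) * x = x * (q : R)) (k : ℤ) (x : R) :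
    ((q ^ k : Rˣ) : R) * x = x * ((q ^ k : Rˣ) : R) := by
  have h : Commute x (q : R) := (hq x).symm
  exact (h.units_zpow_right k).eq.symm

theorem QC.mul_right (hq : ∀ x : R, (q : R) * x = x * (q : R)) {k l : ℤ} {x y z : R}
    (h1 : QC q k x y) (h2 : QC q l x z) : QC q (k + l) x (y * z) := by
  unfold QC at *
  rw [← mul_assoc, h1, mul_assoc, mul_assoc, h2, zpow_add, Units.val_mul, ← mul_assoc y,
    ← qz_central hq l y]
  simp only [mul_assoc]

theorem QC.symm (hq : ∀ x : R, (q : R) * x = x * (q : R)) {k : ℤ} {x y : R}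
    (h1 : QC q k x y) : QC q (-k) y x := by
  unfold QC at *
  rw [h1, ← mul_assoc, ← Units.val_mul, ← zpow_add]
  simp

theorem QC.inv_right (hq : ∀ x : R, (q : R) * x = x * (q : R)) {k : ℤ} {x y yi : R}
    (hl : y * yi = 1) (hr : yi * y = 1)
    (h1 : QC q k x y) : QC q (-k) x yi := by
  have h2 := h1.symm hq
  unfold QC at *
  calc x * yi = yi * (y * x) * yi := by rw [← mul_assoc, hr, one_mul]
    _ = yi * (((q ^ (-k) : Rˣ) : R) * (x * y)) * yi := by rw [h2]
    _ = ((q ^ (-k) : Rˣ) : R) * (yi * x) * (y * yi) := by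
      rw [← mul_assoc yi, ← qz_central hq]; simp only [mul_assoc]
    _ = _ := by rw [hl, mul_one]

theorem QC.inv_left (hq : ∀ x : R, (q : R) * x = x * (q : R)) {k : ℤ} {x xi y : R}
    (hl : x * xi = 1) (hr : xi * x = 1)
    (h1 : QC q k x y) : QC q (-k) xi y := by
  have := ((h1.symm hq).inv_right hq hl hr).symm hq
  simpa using this

theorem QC.cast {k l : ℤ} {x y : R} (h : QC q k x y) (e : k = l) : QC q l x y := e ▸ h

theorem QC.comm {k : ℤ} {x y : R} (h : QC q k x y) (e : k = 0) : x * y = y * x := by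
  subst e; unfold QC at h; simpa using h

end QCsec

namespace MSys
variable {R : Type*} [Ring R] {q : Rˣ} {r : ℕ} {M Mi : ℕ → ℤ → R}

theorem qc (H : MSys q r M Mi) (α β : ℕ) (n m : ℤ) (ha : α ≤ r + 1) (hb : β ≤ r + 1)
    (h : |m - n| ≤ |(β : ℤ) - (α : ℤ)| + 1) (k : ℤ) (hk : k = (m - n) * min (α : ℤ) β) :
    QC q k (M α n) (M β m) := by
  have := H.hext α β n (m - n) ha hb h
  unfold QC
  rw [show n + (m - n) = m by ring] at this
  rw [this, mul_assoc, hk]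
  push_cast
  rfl

/-- y variable -/
def yv {R : Type*} [Ring R] (M Mi : ℕ → ℤ → R) (α : ℕ) (n : ℤ) : R :=
  M α (n + 1) * Mi α n * (M (α - 1) (n - 1) * Mi (α - 1) n)

theorem xy_mul (H : MSys q r M Mi) (α : ℕ) (n : ℤ) (ha : α + 2 ≤ r + 1) :
    xv M Mi (α + 2) n * yv M Mi (α + 1) n = yv M Mi (α + 2) n * xv M Mi (α + 1) (n - 1) := by
  have h1 := H.hR (α + 1) (n + 1) (by omega)
  have h2 := H.hL (α + 1) n (by omega)
  have h3 := H.hR (α + 1) n (by omega)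
  have h4 := H.hL (α + 1) (n - 1) (by omega)
  simp only [xv, yv, xiv, xivInv, show α + 2 - 1 = α + 1 by omega, show α + 1 - 1 = α by omega,
    sub_add_cancel]
  have e1 : ∀ z, Mi (α + 1) (n + 1) * (M (α + 1) (n + 1) * z) = z := fun z => by
    rw [← mul_assoc, h1, one_mul]
  have e2 : ∀ z, M (α + 1) n * (Mi (α + 1) n * z) = z := fun z => by
    rw [← mul_assoc, h2, one_mul]
  have e3 : ∀ z, Mi (α + 1) n * (M (α + 1) n * z) = z := fun z => by
    rw [← mul_assoc, h3, one_mul]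
  have e4 : ∀ z, M (α + 1) (n - 1) * (Mi (α + 1) (n - 1) * z) = z := fun z => by
    rw [← mul_assoc, h4, one_mul]
  simp only [mul_assoc, e1, e2, e3, e4]

/-- second form of the difference -/
theorem xy_sub_right (H : MSys q r M Mi) (β : ℕ) (n : ℤ) (ha : β + 1 ≤ r + 1) :
    xv M Mi (β + 1) n - yv M Mi (β + 1) (n + 1) =
      M (β + 2) (n + 1) * Mi (β + 1) (n + 1) * (M β n * Mi (β + 1) n) := by
  have hq := H.hq
  have b0l := H.hL (β + 1) n ha
  have b0r := H.hR (β + 1) n ha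
  have b1l := H.hL (β + 1) (n + 1) ha
  have b1r := H.hR (β + 1) (n + 1) ha
  have c1l := H.hL β (n + 1) (by omega)
  have c1r := H.hR β (n + 1) (by omega)
  have hs := H.hsys (β + 1) (n + 1) (by omega) ha
  have k1 : QC q (β + 1) (M (β + 1) n) (M (β + 1) (n + 1)) :=
    H.qc _ _ _ _ ha ha (by simp) _ (by simp)
  have k2 : QC q 0 (M β (n + 1)) (M (β + 1) (n + 1)) :=
    H.qc _ _ _ _ (by omega) ha (by simp) _ (by simp)
  have k3 : QC q 0 (M β n) (M (β + 1) n) :=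
    H.qc _ _ _ _ (by omega) ha (by simp) _ (by simp)
  have k4 : QC q β (M β n) (M β (n + 1)) :=
    H.qc _ _ _ _ (by omega) (by omega) (by simp) _ (by simp)
  have k5 : QC q β (M (β + 1) n) (M β (n + 1)) :=
    H.qc _ _ _ _ (by omega) (by omega) (by simp) _ (by simp)
  simp only [xv, yv, xiv, xivInv, show β + 1 - 1 = β by omega, show n + 1 - 1 = n by ring,
    show β + 1 + 1 = β + 2 by omega] at hs ⊢
  set a1 := M (β + 2) (n + 1)
  set b0 := M (β + 1) n
  set b1 := M (β + 1) (n + 1)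
  set b2 := M (β + 1) (n + 1 + 1)
  set b0i := Mi (β + 1) n
  set b1i := Mi (β + 1) (n + 1)
  set c0 := M β n
  set c1 := M β (n + 1)
  set c1i := Mi β (n + 1)
  have e1 : b2 * b1i = b1 * b0i - a1 * c1 * b1i * b0i := by
    have t1 : QC q (β + 1) b0i b1i := by
      have := (k1.inv_left hq b0l b0r).inv_right hq b1l b1r
      simpa using this
    have t2 : b2 = ((q ^ (-(β + 1) : ℤ) : Rˣ) : R) * ((b1 ^ 2 - a1 * c1) * b0i) := by
      rw [← hs]
      rw [mul_assoc, mul_assoc ((q : R) ^ (β + 1)), b0l, mul_one, ← mul_assoc]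
      rw [← Units.val_pow_eq_pow_val, ← Units.val_mul, ← zpow_natCast, ← zpow_add]
      simp
    rw [t2, mul_assoc, mul_assoc, t1, ← mul_assoc (b1 ^ 2 - a1 * c1), ← qz_central hq,
      mul_assoc, ← mul_assoc, ← Units.val_mul, ← zpow_add]
    simp only [neg_add_cancel, zpow_zero, Units.val_one, one_mul, sub_mul, pow_two, mul_assoc]
    rw [← mul_assoc b1 b1i, b1l, one_mul]
  rw [e1, sub_mul, sub_sub_cancel]
  have e2 : c1 * b1i = b1i * c1 := (k2.inv_right hq b1l b1r).comm (by simp)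
  have e3 : c1 * (b0i * c0) = b0i * c0 * c1 :=
    (((k5.symm hq).inv_right hq b0l b0r).mul_right hq (k4.symm hq)).comm (by simp)
  have e4 : c0 * b0i = b0i * c0 := (k3.inv_right hq b0l b0r).comm (by simp)
  calc a1 * c1 * b1i * b0i * (c0 * c1i) = a1 * (c1 * b1i) * (b0i * c0) * c1i := by
        simp only [mul_assoc]
    _ = a1 * b1i * (c1 * (b0i * c0)) * c1i := by rw [e2]; simp only [mul_assoc]
    _ = a1 * b1i * (b0i * c0) * (c1 * c1i) := by rw [e3]; simp only [mul_assoc]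
    _ = _ := by rw [c1l, mul_one, e4]

/-- (c): b0 b1⁻¹ a0 = a0 b1⁻¹ b0 -/
theorem swap3 (H : MSys q r M Mi) (β : ℕ) (n : ℤ) (ha : β + 1 ≤ r + 1) :
    M β n * Mi β (n + 1) * M (β + 1) n = M (β + 1) n * Mi β (n + 1) * M β n := by
  have hq := H.hq
  have b1l := H.hL β (n + 1) (by omega)
  have b1r := H.hR β (n + 1) (by omega)
  have k1 : QC q β (M β n) (M β (n + 1)) :=
    H.qc _ _ _ _ (by omega) (by omega) (by simp) _ (by simp)
  have k2 : QC q β (M (β + 1) n) (M β (n + 1)) :=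
    H.qc _ _ _ _ (by omega) (by omega) (by simp) _ (by simp)
  have k3 : QC q 0 (M β n) (M (β + 1) n) :=
    H.qc _ _ _ _ (by omega) ha (by simp) _ (by simp)
  rw [k1.inv_right hq b1l b1r, k2.inv_right hq b1l b1r]
  simp only [mul_assoc]
  rw [k3.comm rfl]

/-- first form of the difference -/
theorem xy_sub_left (H : MSys q r M Mi) (β : ℕ) (n : ℤ) (ha : β + 2 ≤ r + 1) :
    xv M Mi (β + 2) n - yv M Mi (β + 2) n =
      M (β + 2) (n + 1) * Mi (β + 1) (n + 1) * (M β n * Mi (β + 1) n) := by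
  have hq := H.hq
  have a0l := H.hL (β + 2) n ha
  have a0r := H.hR (β + 2) n ha
  have b0l := H.hL (β + 1) n (by omega)
  have b1l := H.hL (β + 1) (n + 1) (by omega)
  have b1r := H.hR (β + 1) (n + 1) (by omega)
  have hs := H.hsys (β + 1) n (by omega) (by omega)
  have k1 : QC q (β + 1) (M (β + 1) n) (M (β + 1) (n + 1)) :=
    H.qc _ _ _ _ (by omega) (by omega) (by simp) _ (by simp)
  have k2 : QC q (β + 1) (M (β + 2) n) (M (β + 1) (n + 1)) :=
    H.qc _ _ _ _ (by omega) (by omega) (by simp) _ (by simp)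
  simp only [xv, yv, xiv, xivInv, show β + 2 - 1 = β + 1 by omega, show β + 1 - 1 = β by omega,
    show β + 1 + 1 = β + 2 by omega] at hs ⊢
  set a1 := M (β + 2) (n + 1)
  set a0 := M (β + 2) n
  set a0i := Mi (β + 2) n
  set b0 := M (β + 1) n
  set b1 := M (β + 1) (n + 1)
  set bm := M (β + 1) (n - 1)
  set b0i := Mi (β + 1) n
  set b1i := Mi (β + 1) (n + 1)
  set c0 := M β n
  have t2 : bm = ((q ^ (-(β + 1) : ℤ) : Rˣ) : R) * (b1i * (b0 ^ 2 - a0 * c0)) := by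
    rw [← hs]
    rw [mul_assoc, ← mul_assoc b1i, ← Units.val_pow_eq_pow_val, ← zpow_natCast,
      ← qz_central hq, mul_assoc, ← mul_assoc b1i, b1r, one_mul, ← mul_assoc, ← Units.val_mul,
      ← zpow_add]
    simp
  have t3 : b0 * b1i = ((q ^ (-(β + 1) : ℤ) : Rˣ) : R) * (b1i * b0) := k1.inv_right hq b1l b1r
  have t4 : a0 * b1i = ((q ^ (-(β + 1) : ℤ) : Rˣ) : R) * (b1i * a0) := k2.inv_right hq b1l b1r
  calc a1 * a0i * (b0 * b1i) - a1 * a0i * (bm * b0i)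
      = a1 * a0i * (((q ^ (-(β + 1) : ℤ) : Rˣ) : R) * (b1i * b0)
        - ((q ^ (-(β + 1) : ℤ) : Rˣ) : R) * (b1i * (b0 * (b0 * b0i) - a0 * c0 * b0i))) := by
        rw [t3, t2]; simp only [pow_two, mul_assoc, sub_mul, mul_sub]
    _ = a1 * a0i * ((((q ^ (-(β + 1) : ℤ) : Rˣ) : R) * (b1i * a0)) * (c0 * b0i)) := by
        rw [b0l, mul_one]; simp only [mul_sub, mul_assoc, sub_sub_cancel]
    _ = a1 * (a0i * a0) * b1i * (c0 * b0i) := by rw [← t4]; simp only [mul_assoc]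
    _ = _ := by rw [a0r, mul_one]

theorem xy_exch (H : MSys q r M Mi) (β : ℕ) (n : ℤ) (ha : β + 2 ≤ r + 1) :
    xv M Mi (β + 2) n + yv M Mi (β + 1) (n + 1) = xv M Mi (β + 1) n + yv M Mi (β + 2) n := by
  have h1 := H.xy_sub_left β n ha
  have h2 := H.xy_sub_right β n (by omega)
  rw [← h2, sub_eq_sub_iff_add_eq_add] at h1
  exact h1

theorem xy_top (H : MSys q r M Mi) (n : ℤ) :
    xv M Mi (r + 1) n = yv M Mi (r + 1) (n + 1) := by
  have h2 := H.xy_sub_right r n le_rfl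
  rw [H.hMtop, zero_mul, zero_mul, sub_eq_zero] at h2
  exact h2

theorem Mi0 (H : MSys q r M Mi) (n : ℤ) : Mi 0 n = 1 := by
  have := H.hL 0 n (by omega)
  rwa [H.hM0, one_mul] at this

theorem x1 (H : MSys q r M Mi) (n : ℤ) : xv M Mi 1 n = M 1 (n + 1) * Mi 1 n := by
  simp [xv, xiv, xivInv, H.hM0, H.Mi0]

theorem y1 (H : MSys q r M Mi) (n : ℤ) : yv M Mi 1 n = M 1 (n + 1) * Mi 1 n := by
  simp [yv, H.hM0, H.Mi0]

/-- Miura operator -/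
def LL (M Mi : ℕ → ℤ → R) : ℕ → ℤ → (ℤ → R) → ℤ → R
  | 0, _, f, b => f b
  | α + 1, n, f, b => LL M Mi α (n + 1) f b - xv M Mi (α + 1) n * LL M Mi α n f (b - 1)

theorem LL_succ (α : ℕ) (n : ℤ) (f : ℤ → R) (b : ℤ) : LL M Mi (α + 1) n f b =
    LL M Mi α (n + 1) f b - xv M Mi (α + 1) n * LL M Mi α n f (b - 1) := rfl

theorem LL_y (H : MSys q r M Mi) (α : ℕ) : ∀ (n : ℤ) (f : ℤ → R) (b : ℤ), α + 1 ≤ r + 1 →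
    LL M Mi (α + 1) n f b = LL M Mi α n f b - yv M Mi (α + 1) n * LL M Mi α (n - 1) f (b - 1) := by
  induction α with
  | zero => intro n f b _; simp [LL, H.x1, H.y1]
  | succ α ih =>
    intro n f b h
    have h' : α + 1 ≤ r + 1 := by omega
    rw [LL, ih _ _ _ h', ih _ _ _ h']
    have e1 := H.xy_exch α n h
    have e2 := H.xy_mul α n h
    rw [LL_succ α n f b, LL_succ α (n - 1) f (b - 1)]
    simp only [show n + 1 - 1 = n by ring, sub_add_cancel]
    simp only [mul_sub, ← mul_assoc]
    rw [e2]
    have e3 : xv M Mi (α + 2) n = xv M Mi (α + 1) n + yv M Mi (α + 2) n - yv M Mi (α + 1) (n + 1) :=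
      eq_sub_of_add_eq e1
    rw [show α + 1 + 1 = α + 2 by rfl, e3, sub_mul, add_mul]
    abel

theorem LL_cons (H : MSys q r M Mi) (n : ℤ) (f : ℤ → R) (b : ℤ) :
    LL M Mi (r + 1) (n + 1) f b = LL M Mi (r + 1) n f b := by
  rw [H.LL_y r (n + 1) f b le_rfl, LL, H.xy_top, show n + 1 - 1 = n by ring]

theorem LL_indep (H : MSys q r M Mi) (n m : ℤ) (f : ℤ → R) (b : ℤ) :
    LL M Mi (r + 1) n f b = LL M Mi (r + 1) m f b := by
  have : ∀ n, LL M Mi (r + 1) n f b = LL M Mi (r + 1) 0 f b := by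
    intro n
    induction n using Int.induction_on with
    | zero => rfl
    | succ i ih => rw [H.LL_cons, ih]
    | pred i ih => rw [← ih, ← H.LL_cons, sub_add_cancel]
  rw [this n, this m]

theorem LL_zero_M (H : MSys q r M Mi) (α : ℕ) : α ≤ r + 1 → ∀ n : ℤ,
    LL M Mi α n (M 1) n = M (α + 1) n * Mi α n ∧
    ∀ b, n + 1 ≤ b → b ≤ n + α → LL M Mi α n (M 1) b = 0 := by
  induction α with
  | zero =>
    intro _ n
    refine ⟨by simp [LL, H.Mi0], fun b h1 h2 => ?_⟩
    push_cast at h2; omega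
  | succ α ih =>
    intro ha n
    have ih := ih (by omega)
    have hq := H.hq
    have a0l := H.hL (α + 1) n ha
    have a0r := H.hR (α + 1) n ha
    have b0l := H.hL α n (by omega)
    have b0r := H.hR α n (by omega)
    have bml := H.hL α (n - 1) (by omega)
    constructor
    · rw [H.LL_y α n _ _ ha, (ih n).1, (ih (n - 1)).1]
      have s3 := H.swap3 α (n - 1) ha
      rw [sub_add_cancel] at s3
      have k1 : QC q (α + 1) (M (α + 1) (n - 1)) (M (α + 1) n) :=
        H.qc _ _ _ _ ha ha (by simp) _ (by simp)
      have k2 : QC q 0 (M α n) (M (α + 1) n) :=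
        H.qc _ _ _ _ (by omega) ha (by simp) _ (by simp)
      have t1 := (k1.inv_right hq a0l a0r).symm hq
      have t2 := (k2.inv_right hq a0l a0r).comm (by simp)
      have hs := H.hsys (α + 1) n (by omega) ha
      simp only [yv, show α + 1 - 1 = α by omega] at hs ⊢
      rw [neg_neg] at t1
      unfold QC at t1
      calc _ = M (α + 1) n * Mi α n - M (α + 1) (n + 1) * Mi (α + 1) n *
            (M α (n - 1) * Mi α n * M (α + 1) (n - 1)) * Mi α (n - 1) := by
            simp only [mul_assoc]
        _ = M (α + 1) n * Mi α n - M (α + 1) (n + 1) * (Mi (α + 1) n * M (α + 1) (n - 1)) *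
            Mi α n * (M α (n - 1) * Mi α (n - 1)) := by rw [s3]; simp only [mul_assoc]
        _ = M (α + 1) n * Mi α n - ((q : R) ^ (α + 1) * M (α + 1) (n + 1) * M (α + 1) (n - 1)) *
            Mi (α + 1) n * Mi α n := by
            rw [bml, mul_one, t1]
            rw [← mul_assoc (M (α + 1) (n + 1)), ← qz_central hq]
            rw [← Units.val_pow_eq_pow_val, ← zpow_natCast]
            push_cast
            simp only [mul_assoc]
        _ = M (α + 1) n * Mi α n - M (α + 1) n * (M (α + 1) n * Mi (α + 1) n) * Mi α n
            + M (α + 1 + 1) n * (M α n * Mi (α + 1) n) * Mi α n := by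
            rw [hs]; simp only [pow_two, sub_mul, mul_assoc]; abel
        _ = _ := by rw [a0l, t2, mul_one, sub_self, zero_add, mul_assoc, mul_assoc, b0l, mul_one]
    · intro b h1 h2
      push_cast at h2
      rw [LL]
      rcases eq_or_lt_of_le h1 with rfl | h1
      · rw [(ih (n + 1)).1, add_sub_cancel_right, (ih n).1]
        have s3 := H.swap3 α n ha
        simp only [xv, xiv, xivInv, show α + 1 - 1 = α by omega]
        rw [sub_eq_zero]
        symm
        calc _ = M (α + 1) (n + 1) * Mi (α + 1) n * (M α n * Mi α (n + 1) * M (α + 1) n) * Mi α n := by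
              simp only [mul_assoc]
          _ = M (α + 1) (n + 1) * (Mi (α + 1) n * M (α + 1) n) * Mi α (n + 1) * (M α n * Mi α n) := by
              rw [s3]; simp only [mul_assoc]
          _ = _ := by rw [a0r, b0l, mul_one, mul_one]
      · rw [(ih (n + 1)).2 b (by omega) (by omega), (ih n).2 (b - 1) (by omega) (by omega)]
        simp

theorem LL_zero_all (H : MSys q r M Mi) (n b : ℤ) : LL M Mi (r + 1) n (M 1) b = 0 := by
  rw [H.LL_indep n (b - 1)]
  exact (H.LL_zero_M (r + 1) le_rfl (b - 1)).2 b (by omega) (by push_cast; omega)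

theorem LL_sub (α : ℕ) : ∀ (n : ℤ) (f g : ℤ → R) (b : ℤ),
    LL M Mi α n (fun y => f y - g y) b = LL M Mi α n f b - LL M Mi α n g b := by
  induction α with
  | zero => intros; rfl
  | succ α ih => intro n f g b; simp only [LL, ih, mul_sub]; abel

theorem LL_add (α : ℕ) : ∀ (n : ℤ) (f g : ℤ → R) (b : ℤ),
    LL M Mi α n (fun y => f y + g y) b = LL M Mi α n f b + LL M Mi α n g b := by
  induction α with
  | zero => intros; rfl
  | succ α ih => intro n f g b; simp only [LL, ih, mul_add]; abel

theorem LL_sum {ι : Type*} (s : Finset ι) (α : ℕ) : ∀ (n : ℤ) (f : ι → ℤ → R) (b : ℤ),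
    LL M Mi α n (fun y => ∑ i ∈ s, f i y) b = ∑ i ∈ s, LL M Mi α n (f i) b := by
  induction α with
  | zero => intros; rfl
  | succ α ih => intro n f b; simp only [LL, ih, Finset.mul_sum, Finset.sum_sub_distrib]

theorem LL_mul_right (c : R) (α : ℕ) : ∀ (n : ℤ) (f : ℤ → R) (b : ℤ),
    LL M Mi α n (fun y => f y * c) b = LL M Mi α n f b * c := by
  induction α with
  | zero => intros; rfl
  | succ α ih => intro n f b; simp only [LL, ih, sub_mul, mul_assoc]

theorem LL_central (c : R) (hc : ∀ x, c * x = x * c) (α : ℕ) : ∀ (n : ℤ) (f : ℤ → R) (b : ℤ),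
    LL M Mi α n (fun y => c * f y) b = c * LL M Mi α n f b := by
  intro n f b
  simp only [hc]
  exact LL_mul_right c α n f b

theorem LL_shift (k : ℤ) (α : ℕ) : ∀ (n : ℤ) (f : ℤ → R) (b : ℤ),
    LL M Mi α n (fun y => f (y + k)) b = LL M Mi α n f (b + k) := by
  induction α with
  | zero => intros; rfl
  | succ α ih => intro n f b; simp only [LL, ih]; rw [show b - 1 + k = b + k - 1 by ring]

theorem LL_shift' (α : ℕ) (n : ℤ) (f : ℤ → R) (b : ℤ) :
    LL M Mi α n (fun y => f (y - 1)) b = LL M Mi α n f (b - 1) :=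
  LL_shift (-1) α n f b

theorem LL_local (α : ℕ) : ∀ (n : ℤ) (f : ℤ → R) (b : ℤ),
    (∀ y, b - α ≤ y → y ≤ b - 1 → f y = 0) → LL M Mi α n f b = f b ∧
      LL M Mi α n f b - f b = 0 := by
  have key : ∀ (α : ℕ) (n : ℤ) (f : ℤ → R) (b : ℤ),
    (∀ y, b - α ≤ y → y ≤ b → f y = 0) → LL M Mi α n f b = 0 := by
    intro α
    induction α with
    | zero => intro n f b h; exact h b (by simp) le_rfl
    | succ α ih =>
      intro n f b h
      push_cast at h
      rw [LL, ih _ _ _ (fun y h1 h2 => h y (by omega) (by omega)),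
        ih _ _ _ (fun y h1 h2 => h y (by omega) (by omega))]
      simp
  have : ∀ (n : ℤ) (f : ℤ → R) (b : ℤ),
    (∀ y, b - α ≤ y → y ≤ b - 1 → f y = 0) → LL M Mi α n f b = f b := by
    induction α with
    | zero => intros; rfl
    | succ α ih =>
      intro n f b h
      push_cast at h
      rw [LL, ih _ _ _ (fun y h1 h2 => h y (by omega) (by omega)),
        key _ _ _ _ (fun y h1 h2 => h y (by omega) (by omega))]
      simp
  intro n f b h
  exact ⟨this n f b h, by rw [this n f b h, sub_self]⟩

end MSys

namespace MSys
variable {R : Type*} [Ring R] {q : Rˣ} {r : ℕ} {M Mi : ℕ → ℤ → R}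

theorem c1 (H : MSys q r M Mi) (n : ℤ) : M 1 n * M 1 (n + 1) = (q : R) * (M 1 (n + 1) * M 1 n) := by
  have k1 : QC q 1 (M 1 n) (M 1 (n + 1)) :=
    H.qc _ _ _ _ (by omega) (by omega) (by simp) _ (by simp)
  simpa [QC] using k1

theorem c2 (H : MSys q r M Mi) (n : ℤ) :
    M 1 (n - 1) * M 1 (n + 1) - (q : R) * (M 1 (n + 1) * M 1 (n - 1)) =
      ((q : R) - 1) * (M 1 n * M 1 n) := by
  have hq := H.hq
  have hr := H.hr
  have k1 : QC q 1 (M 2 n) (M 1 (n + 1)) :=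
    H.qc _ _ _ _ (by omega) (by omega) (by simp) _ (by simp)
  have hs := H.hsys 1 n le_rfl (by omega)
  simp only [pow_one, show 1 - 1 = 0 by rfl, H.hM0, mul_one, show 1 + 1 = 2 by rfl] at hs
  have h2 : M 2 n = M 1 n * M 1 n - (q : R) * M 1 (n + 1) * M 1 (n - 1) := by
    rw [hs, pow_two]; abel
  have c := H.c1 n
  unfold QC at k1
  rw [zpow_one, h2] at k1
  have e1 : M 1 n * M 1 n * M 1 (n + 1) = (q : R) * ((q : R) * (M 1 (n + 1) * (M 1 n * M 1 n))) := by
    rw [mul_assoc, c, ← mul_assoc, ← hq, mul_assoc, ← mul_assoc (M 1 n), c]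
    simp only [mul_assoc]
  have l := H.hR 1 (n + 1) (by omega)
  have key : M 1 (n + 1) * ((q : R) * (M 1 (n - 1) * M 1 (n + 1))) =
      M 1 (n + 1) * ((q : R) * ((q : R) * (M 1 (n + 1) * M 1 (n - 1)) + ((q : R) - 1) * (M 1 n * M 1 n))) := by
    have hm : ∀ z, M 1 (n + 1) * ((q : R) * z) = (q : R) * (M 1 (n + 1) * z) := fun z => by
      rw [← mul_assoc, ← hq, mul_assoc]
    rw [sub_mul, e1] at k1
    simp only [hm, mul_add, sub_mul, mul_sub, mul_assoc, one_mul] at k1 ⊢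
    rw [sub_eq_iff_eq_add] at k1
    rw [k1]; abel
  have key2 := congrArg (fun z => ((q⁻¹ : Rˣ) : R) * (Mi 1 (n + 1) * z)) key
  simp only [← mul_assoc (Mi 1 (n + 1)), l, one_mul, Units.inv_mul_cancel_left] at key2
  rw [key2]; abel

theorem commX (H : MSys q r M Mi) (α : ℕ) (ha : α + 2 ≤ r + 1) (n x : ℤ) (hx : x = n ∨ x = n + 1) :
    M 1 x * xv M Mi (α + 2) n = xv M Mi (α + 2) n * M 1 x := by
  have hq := H.hq
  have a0 : QC q (n - x) (M 1 x) (M (α + 2) n) :=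
    H.qc _ _ _ _ (by omega) (by omega)
      (by push_cast; rcases hx with rfl | rfl <;> simp <;> positivity) _
      (by rw [min_eq_left (by push_cast; omega)]; simp)
  have a1 : QC q (n + 1 - x) (M 1 x) (M (α + 2) (n + 1)) :=
    H.qc _ _ _ _ (by omega) (by omega)
      (by push_cast; rcases hx with rfl | rfl <;> simp <;> positivity) _
      (by rw [min_eq_left (by push_cast; omega)]; simp)
  have b0 : QC q (n - x) (M 1 x) (M (α + 1) n) :=
    H.qc _ _ _ _ (by omega) (by omega)
      (by push_cast; rcases hx with rfl | rfl <;> simp <;> positivity) _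
      (by rw [min_eq_left (by push_cast; omega)]; simp)
  have b1 : QC q (n + 1 - x) (M 1 x) (M (α + 1) (n + 1)) :=
    H.qc _ _ _ _ (by omega) (by omega)
      (by push_cast; rcases hx with rfl | rfl <;> simp <;> positivity) _
      (by rw [min_eq_left (by push_cast; omega)]; simp)
  have a0' := a0.inv_right hq (H.hL _ _ (by omega)) (H.hR _ _ (by omega))
  have b1' := b1.inv_right hq (H.hL _ _ (by omega)) (H.hR _ _ (by omega))
  have := (a1.mul_right hq a0').mul_right hq (b0.mul_right hq b1')
  exact this.comm (by ring)

theorem commY (H : MSys q r M Mi) (α : ℕ) (ha : α + 2 ≤ r + 1) (n x : ℤ) (hx : x = n - 1 ∨ x = n) :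
    M 1 x * yv M Mi (α + 2) n = yv M Mi (α + 2) n * M 1 x := by
  have hq := H.hq
  have a0 : QC q (n - x) (M 1 x) (M (α + 2) n) :=
    H.qc _ _ _ _ (by omega) (by omega)
      (by push_cast; rcases hx with rfl | rfl <;> simp <;> positivity) _
      (by rw [min_eq_left (by push_cast; omega)]; simp)
  have a1 : QC q (n + 1 - x) (M 1 x) (M (α + 2) (n + 1)) :=
    H.qc _ _ _ _ (by omega) (by omega)
      (by
        push_cast
        rw [abs_of_nonneg (show (0 : ℤ) ≤ (α : ℤ) + 2 - 1 by omega), abs_le]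
        constructor <;> omega) _
      (by rw [min_eq_left (by push_cast; omega)]; simp)
  have b0 : QC q (n - x) (M 1 x) (M (α + 1) n) :=
    H.qc _ _ _ _ (by omega) (by omega)
      (by push_cast; rcases hx with rfl | rfl <;> simp <;> positivity) _
      (by rw [min_eq_left (by push_cast; omega)]; simp)
  have b1 : QC q (n - 1 - x) (M 1 x) (M (α + 1) (n - 1)) :=
    H.qc _ _ _ _ (by omega) (by omega)
      (by push_cast; rcases hx with rfl | rfl <;> simp <;> positivity) _
      (by rw [min_eq_left (by push_cast; omega)]; simp)
  have a0' := a0.inv_right hq (H.hL _ _ (by omega)) (H.hR _ _ (by omega))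
  have b0' := b0.inv_right hq (H.hL _ _ (by omega)) (H.hR _ _ (by omega))
  have := (a1.mul_right hq a0').mul_right hq (b1.mul_right hq b0')
  exact this.comm (by ring)

theorem x1_a (H : MSys q r M Mi) (n : ℤ) :
    M 1 n * xv M Mi 1 n = (q : R) * (xv M Mi 1 n * M 1 n) ∧ xv M Mi 1 n * M 1 n = M 1 (n + 1) ∧
    M 1 (n + 1) * xv M Mi 1 n = (q : R) * (xv M Mi 1 n * M 1 (n + 1)) := by
  have hq := H.hq
  have l := H.hL 1 n (by omega)
  have l' := H.hR 1 n (by omega)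
  have k1 : QC q 1 (M 1 n) (M 1 (n + 1)) :=
    H.qc _ _ _ _ (by omega) (by omega) (by simp) _ (by simp)
  have k2 : QC q 0 (M 1 n) (M 1 n) :=
    H.qc _ _ _ _ (by omega) (by omega) (by simp) _ (by simp)
  have k3 : QC q 0 (M 1 (n + 1)) (M 1 (n + 1)) :=
    H.qc _ _ _ _ (by omega) (by omega) (by simp) _ (by simp)
  rw [H.x1]
  refine ⟨?_, by rw [mul_assoc, l', mul_one], ?_⟩
  · have := (k1.mul_right hq (k2.inv_right hq l l'))
    simpa [QC] using this
  · have := (k3.mul_right hq ((k1.symm hq).inv_right hq l l'))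
    simpa [QC] using this

theorem K1 (H : MSys q r M Mi) (n x : ℤ) (hx : x = n - 1 ∨ x = n) :
    M 1 x * xv M Mi 1 n + M 1 (x + 1) = xv M Mi 1 n * M 1 x + (q : R) * M 1 (x + 1) ∧
    M 1 (x + 1) * xv M Mi 1 n = (q : R) * (xv M Mi 1 n * M 1 (x + 1)) := by
  obtain ⟨h1, h2, h3⟩ := H.x1_a n
  have hq := H.hq
  rcases hx with rfl | rfl
  · rw [sub_add_cancel]
    refine ⟨?_, h1⟩
    have l := H.hL 1 n (by omega)
    have l' := H.hR 1 n (by omega)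
    have k1 : QC q 1 (M 1 (n - 1)) (M 1 n) :=
      H.qc _ _ _ _ (by omega) (by omega) (by simp) _ (by simp)
    have k1' := (k1.inv_right hq l l').symm hq
    have e : Mi 1 n * M 1 (n - 1) = (q : R) * (M 1 (n - 1) * Mi 1 n) := by
      simpa [QC] using k1'
    have c := H.c2 n
    rw [H.x1, mul_assoc (M 1 (n + 1)), e, ← mul_assoc (M 1 (n + 1)), ← hq]
    rw [sub_eq_iff_eq_add] at c
    rw [← mul_assoc, c]
    simp only [add_mul, sub_mul, mul_assoc, l, mul_one, one_mul]
    abel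
  · refine ⟨?_, h3⟩
    rw [h1, h2]; abel

theorem K (H : MSys q r M Mi) (α : ℕ) : α + 1 ≤ r + 1 → ∀ (n x : ℤ) (f : ℤ → R) (b : ℤ),
    (x = n - 1 ∨ x = n) →
    M 1 x * LL M Mi (α + 1) n f b - M 1 (x + 1) * LL M Mi (α + 1) n f (b - 1) =
    LL M Mi (α + 1) n (fun y => M 1 x * f y) b
      - (q : R) * LL M Mi (α + 1) n (fun y => M 1 (x + 1) * f y) (b - 1) := by
  have hq := H.hq
  induction α with
  | zero =>
    intro _ n x f b hx
    obtain ⟨h1, h2⟩ := H.K1 n x hx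
    simp only [LL, zero_add, mul_sub]
    have h1' := congrArg (· * f (b - 1)) h1
    have h2' := congrArg (· * f (b - 1 - 1)) h2
    simp only [add_mul, mul_assoc] at h1' h2'
    rw [h2']
    have : M 1 x * (xv M Mi 1 n * f (b - 1)) = xv M Mi 1 n * (M 1 x * f (b - 1)) +
      (q : R) * (M 1 (x + 1) * f (b - 1)) - M 1 (x + 1) * f (b - 1) := eq_sub_of_add_eq h1'
    rw [this]
    abel
  | succ α ih =>
    intro ha n x f b hx
    have ih := ih (by omega)
    have main : ∀ (X : R) (n1 n2 : ℤ), (x = n1 - 1 ∨ x = n1) → (x = n2 - 1 ∨ x = n2) →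
        M 1 x * X = X * M 1 x → M 1 (x + 1) * X = X * M 1 (x + 1) →
        M 1 x * (LL M Mi (α + 1) n1 f b - X * LL M Mi (α + 1) n2 f (b - 1))
          - M 1 (x + 1) * (LL M Mi (α + 1) n1 f (b - 1) - X * LL M Mi (α + 1) n2 f (b - 1 - 1)) =
        (LL M Mi (α + 1) n1 (fun y => M 1 x * f y) b
          - X * LL M Mi (α + 1) n2 (fun y => M 1 x * f y) (b - 1))
          - (q : R) * (LL M Mi (α + 1) n1 (fun y => M 1 (x + 1) * f y) (b - 1)
          - X * LL M Mi (α + 1) n2 (fun y => M 1 (x + 1) * f y) (b - 1 - 1)) := by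
      intro X n1 n2 hx1 hx2 hc1 hc2
      have i1 := ih n1 x f b hx1
      have i2 := congrArg (X * ·) (ih n2 x f (b - 1) hx2)
      simp only [mul_sub] at i2 ⊢
      rw [← mul_assoc (M 1 x) X, ← mul_assoc (M 1 (x + 1)) X, hc1, hc2, mul_assoc, mul_assoc,
        ← mul_assoc (q : R) X, hq X, mul_assoc]
      rw [sub_eq_iff_eq_add] at i1
      rw [i1]
      have i3 := eq_add_of_sub_eq i2
      rw [i3]
      abel
    rcases hx with hx | hx
    · rw [H.LL_y (α + 1) n f b ha, H.LL_y (α + 1) n f (b - 1) ha, H.LL_y (α + 1) n _ b ha,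
        H.LL_y (α + 1) n _ (b - 1) ha]
      exact main _ _ _ (by omega) (by omega) (H.commY α ha n x (by omega))
        (H.commY α ha n (x + 1) (by omega))
    · rw [LL_succ (α + 1) n f b, LL_succ (α + 1) n f (b - 1), LL_succ (α + 1) n _ b,
        LL_succ (α + 1) n _ (b - 1)]
      exact main _ _ _ (by omega) (by omega) (H.commX α ha n x (by omega))
        (H.commX α ha n (x + 1) (by omega))

/-- 2x2 quantum determinant -/
def D2 (q : Rˣ) (M : ℕ → ℤ → R) (x y : ℤ) : R := M 1 x * M 1 y - (q : R) * (M 1 (x + 1) * M 1 (y - 1))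

theorem D2_adj (H : MSys q r M Mi) (n : ℤ) : D2 q M n (n + 1) = 0 := by
  rw [D2, H.c1, add_sub_cancel_right, sub_self]

theorem LL_D2 (H : MSys q r M Mi) (α : ℕ) (ha : α + 1 ≤ r + 1) (n x b : ℤ)
    (hx : x = n - 1 ∨ x = n) (h1 : LL M Mi (α + 1) n (M 1) b = 0)
    (h2 : LL M Mi (α + 1) n (M 1) (b - 1) = 0) :
    LL M Mi (α + 1) n (fun y => D2 q M x y + D2 q M (y - 1) (x + 1)) b = 0 := by
  have hq := H.hq
  rw [LL_add]
  have k := H.K α ha n x (M 1) b hx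
  rw [h1, h2, mul_zero, mul_zero, sub_zero] at k
  have a1 : LL M Mi (α + 1) n (fun y => D2 q M x y) b = 0 := by
    unfold D2
    rw [LL_sub, LL_central _ hq, LL_shift' (α + 1) n (fun y => M 1 (x + 1) * M 1 y)]
    exact k.symm
  have a2 : LL M Mi (α + 1) n (fun y => D2 q M (y - 1) (x + 1)) b = 0 := by
    unfold D2
    rw [LL_sub, LL_central _ hq, LL_mul_right, LL_mul_right, LL_shift' (α + 1) n (M 1)]
    simp only [sub_add_cancel]
    rw [h2, h1]
    simp
  rw [a1, a2, add_zero]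

theorem RR_pos (H : MSys q r M Mi) (g : ℕ) : ∀ x : ℤ,
    D2 q M x (x + 1 + g) + D2 q M (x + g) (x + 1) = 0 := by
  induction g using Nat.strong_induction_on with
  | _ g ih =>
  intro x
  have hr := H.hr
  rcases Nat.lt_or_ge g 2 with hg | hg
  · interval_cases g
    · have := H.D2_adj x
      simp [this]
    · have c := H.c2 (x + 1)
      simp only [D2, Nat.cast_one, add_sub_cancel_right] at c ⊢
      rw [sub_eq_iff_eq_add] at c
      rw [c, sub_mul, one_mul]
      abel
  · have key : ∀ α : ℕ, α + 1 ≤ r + 1 → α + 1 ≤ g → (α + 1 = g ∨ α = r) →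
        D2 q M x (x + 1 + g) + D2 q M (x + g) (x + 1) = 0 := by
      intro α ha hag hor
      have hz : LL M Mi (α + 1) (x + 1) (fun y => D2 q M x y + D2 q M (y - 1) (x + 1)) (x + 1 + g) = 0 := by
        apply H.LL_D2 α ha (x + 1) x (x + 1 + g) (by omega)
        · rcases hor with h | h
          · exact (H.LL_zero_M (α + 1) ha (x + 1)).2 _ (by omega) (by omega)
          · subst h; exact H.LL_zero_all _ _
        · rcases hor with h | h
          · exact (H.LL_zero_M (α + 1) ha (x + 1)).2 _ (by omega) (by omega)
          · subst h; exact H.LL_zero_all _ _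
      rw [(LL_local (α + 1) _ _ _ ?_).1] at hz
      · rwa [show x + 1 + (g : ℤ) - 1 = x + g by ring] at hz
      · intro y h1 h2
        push_cast at h1
        obtain ⟨k, hk⟩ := Int.eq_ofNat_of_zero_le (show 0 ≤ y - x - 1 by omega)
        have := ih k (by omega) x
        rw [show y = x + 1 + k by omega, show x + 1 + (k : ℤ) - 1 = x + k by ring]
        exact this
    rcases Nat.lt_or_ge g (r + 1) with h | h
    · exact key (g - 1) (by omega) (by omega) (by omega)
    · exact key r (by omega) (by omega) (by omega)

theorem RR (H : MSys q r M Mi) (x y : ℤ) : D2 q M x y + D2 q M (y - 1) (x + 1) = 0 := by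
  rcases le_total (x + 1) y with h | h
  · obtain ⟨k, hk⟩ := Int.eq_ofNat_of_zero_le (show 0 ≤ y - x - 1 by omega)
    have := H.RR_pos k x
    rw [show y = x + 1 + k by omega, show x + 1 + (k : ℤ) - 1 = x + k by ring]
    exact this
  · obtain ⟨k, hk⟩ := Int.eq_ofNat_of_zero_le (show 0 ≤ x + 1 - y by omega)
    have := H.RR_pos k (y - 1)
    rw [show y - 1 + 1 + (k : ℤ) = x + 1 by omega, show y - 1 + (k : ℤ) = x by omega,
      sub_add_cancel] at this
    rw [add_comm]
    exact this

end MSys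

section DDsec
variable {R : Type*} [Ring R]

/-- number of true entries -/
def cnt {α : ℕ} (e : Fin α → Bool) : ℕ := ∑ i, (e i).toNat

/-- quantum determinant, recursive form -/
def DD (q : Rˣ) (f : ℤ → R) : (α : ℕ) → (Fin α → ℤ) → R
  | 0, _ => 1
  | α + 1, ν => ∑ e : Fin α → Bool, (-(q : R)) ^ cnt e *
      (f (ν 0 + cnt e) * DD q f α (fun i => ν i.succ - ((e i).toNat : ℤ)))

theorem sum_bool_cons {A : Type*} [AddCommMonoid A] {α : ℕ} (F : (Fin (α + 1) → Bool) → A) :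
    ∑ e, F e = ∑ e : Fin α → Bool, (F (Fin.cons false e) + F (Fin.cons true e)) := by
  rw [← (Fin.consEquiv (fun _ => Bool)).sum_comp, Fintype.sum_prod_type, Finset.sum_comm' (t' := Finset.univ) (s' := fun _ => Finset.univ) (by simp)]
  refine Finset.sum_congr rfl fun e _ => ?_
  rw [Fintype.sum_bool, add_comm]
  rfl

theorem sum_bool_snoc {A : Type*} [AddCommMonoid A] {α : ℕ} (F : (Fin (α + 1) → Bool) → A) :
    ∑ e, F e = ∑ e : Fin α → Bool, (F (Fin.snoc e false) + F (Fin.snoc e true)) := by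
  rw [← (Fin.snocEquiv (fun _ => Bool)).sum_comp, Fintype.sum_prod_type, Finset.sum_comm' (t' := Finset.univ) (s' := fun _ => Finset.univ) (by simp)]
  refine Finset.sum_congr rfl fun e _ => ?_
  rw [Fintype.sum_bool, add_comm]
  rfl

theorem cnt_cons {α : ℕ} (s : Bool) (e : Fin α → Bool) :
    cnt (Fin.cons s e : Fin (α + 1) → Bool) = s.toNat + cnt e := by
  simp [cnt, Fin.sum_univ_succ]

theorem cnt_snoc {α : ℕ} (s : Bool) (e : Fin α → Bool) :
    cnt (Fin.snoc e s : Fin (α + 1) → Bool) = cnt e + s.toNat := by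
  simp [cnt, Fin.sum_univ_castSucc]

theorem cnt_le {α : ℕ} (e : Fin α → Bool) : cnt e ≤ α := by
  unfold cnt
  calc _ ≤ ∑ i : Fin α, 1 := Finset.sum_le_sum fun i _ => Bool.toNat_le (e i)
    _ = α := by simp

theorem cnt_comp {α : ℕ} (e : Fin α → Bool) (σ : Equiv.Perm (Fin α)) : cnt (e ∘ σ) = cnt e :=
  Equiv.sum_comp σ (fun i => (e i).toNat)

theorem mq_central {q : Rˣ} (hq : ∀ x : R, (q : R) * x = x * (q : R)) (k : ℕ) (x : R) :
    (-(q : R)) ^ k * x = x * (-(q : R)) ^ k := by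
  have h : Commute (q : R) x := hq x
  exact (h.neg_left.pow_left k).eq

theorem mq_left {q : Rˣ} (hq : ∀ x : R, (q : R) * x = x * (q : R)) (k : ℕ) (x y : R) :
    x * ((-(q : R)) ^ k * y) = (-(q : R)) ^ k * (x * y) := by
  rw [← mul_assoc, ← mq_central hq, mul_assoc]

theorem DD_snoc {q : Rˣ} (hq : ∀ x : R, (q : R) * x = x * (q : R)) (f : ℤ → R) (α : ℕ) :
    ∀ ν : Fin (α + 1) → ℤ, DD q f (α + 1) ν = ∑ e : Fin α → Bool, (-(q : R)) ^ cnt e *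
      (DD q f α (fun i => ν i.castSucc + ((e i).toNat : ℤ)) * f (ν (Fin.last α) - cnt e)) := by
  induction α with
  | zero => intro ν; simp [DD, cnt]
  | succ α ih =>
    intro ν
    rw [DD, sum_bool_snoc, sum_bool_cons]
    have t1 : ∀ (s : Bool) (e : Fin α → Bool), 
       (-(q : R)) ^ cnt (Fin.snoc e s : Fin (α + 1) → Bool) *
        (f (ν 0 + cnt (Fin.snoc e s : Fin (α + 1) → Bool)) *
          DD q f (α + 1) (fun i => ν i.succ - (((Fin.snoc e s : Fin (α + 1) → Bool) i).toNat : ℤ))) =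
        ∑ e' : Fin α → Bool, (-(q : R)) ^ (cnt e + cnt e' + s.toNat) *
          (f (ν 0 + (cnt e + s.toNat)) *
          DD q f α (fun i => ν i.castSucc.succ - ((e i).toNat : ℤ) + ((e' i).toNat : ℤ)) *
          f (ν (Fin.last _) - (cnt e' + s.toNat))) := by
      intro s e
      rw [ih, Finset.mul_sum, Finset.mul_sum]
      refine Finset.sum_congr rfl fun e' _ => ?_
      rw [mq_left hq, ← mul_assoc (_ ^ _), ← pow_add, cnt_snoc]
      simp only [Fin.snoc_castSucc, Fin.snoc_last, Fin.succ_last, mul_assoc]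
      push_cast
      congr 2
      · ring
      · congr 2
        change (ν (Fin.last (α + 1)) - _ - _) = _
        ring
    have t2 : ∀ (s : Bool) (e' : Fin α → Bool), 
       (-(q : R)) ^ cnt (Fin.cons s e' : Fin (α + 1) → Bool) *
        (DD q f (α + 1) (fun i => ν i.castSucc + (((Fin.cons s e' : Fin (α + 1) → Bool) i).toNat : ℤ)) *
         f (ν (Fin.last _) - cnt (Fin.cons s e' : Fin (α + 1) → Bool)))  =
        ∑ e : Fin α → Bool, (-(q : R)) ^ (cnt e + cnt e' + s.toNat) *
          (f (ν 0 + (cnt e + s.toNat)) *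
          DD q f α (fun i => ν i.castSucc.succ - ((e i).toNat : ℤ) + ((e' i).toNat : ℤ)) *
          f (ν (Fin.last _) - (cnt e' + s.toNat))) := by
      intro s e'
      rw [DD, Finset.sum_mul, Finset.mul_sum]
      refine Finset.sum_congr rfl fun e _ => ?_
      rw [mul_assoc (_ ^ _), ← mul_assoc (_ ^ _), ← pow_add, cnt_cons]
      simp only [Fin.cons_succ, Fin.cons_zero, Fin.castSucc_zero, Fin.succ_castSucc, mul_assoc]
      push_cast
      congr 2
      · ring
      · congr 1; ring
      · congr 2
        · funext i; ring
        · congr 1; ring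
    simp only [t1, t2]
    rw [Finset.sum_add_distrib, Finset.sum_add_distrib, Finset.sum_comm]
    congr 1
    rw [Finset.sum_comm]

/-- abstract 2x2 -/
def E2 (q : Rˣ) (f : ℤ → R) (x y : ℤ) : R := f x * f y - (q : R) * (f (x + 1) * f (y - 1))

theorem DD_two {q : Rˣ} (hq : ∀ x : R, (q : R) * x = x * (q : R)) (f : ℤ → R) (α : ℕ)
    (ν : Fin (α + 2) → ℤ) : DD q f (α + 2) ν = ∑ e : Fin α → Bool, ∑ e' : Fin α → Bool,
      (-(q : R)) ^ (cnt e + cnt e') * (E2 q f (ν 0 + cnt e) (ν 1 + cnt e') *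
        DD q f α (fun i => ν i.succ.succ - ((e i).toNat : ℤ) - ((e' i).toNat : ℤ))) := by
  rw [DD, sum_bool_cons]
  refine Finset.sum_congr rfl fun e _ => ?_
  rw [DD, DD]
  simp only [Finset.mul_sum]
  rw [← Finset.sum_add_distrib]
  refine Finset.sum_congr rfl fun e' _ => ?_
  have g : ∀ (a b : ℕ) (x y d : R), (-(q : R)) ^ a * (x * ((-(q : R)) ^ b * (y * d))) =
      (-(q : R)) ^ (a + b) * ((x * y) * d) := by
    intro a b x y d
    rw [mq_left hq, pow_add]; simp only [mul_assoc]
  simp only [cnt_cons, Fin.cons_zero, Fin.cons_succ, g, Fin.succ_zero_eq_one]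
  simp only [Bool.toNat_false, Bool.toNat_true, zero_add, Nat.cast_zero, sub_zero, Nat.cast_add,
    Nat.cast_one, E2, sub_mul, mul_sub]
  have a1 : ν 0 + (1 + (cnt e : ℤ)) = ν 0 + cnt e + 1 := by ring
  have a2 : ν 1 - 1 + (cnt e' : ℤ) = ν 1 + cnt e' - 1 := by ring
  rw [a1, a2, sub_eq_add_neg, show 1 + cnt e + cnt e' = cnt e + cnt e' + 1 by ring, pow_succ,
    mul_neg, neg_mul, ← sub_eq_add_neg, ← sub_eq_add_neg]
  simp only [mul_assoc]

end DDsec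

section GGsec
variable {R : Type*} [Ring R]

/-- determinant in shifted coordinates -/
def GG (q : Rˣ) (f : ℤ → R) (α : ℕ) (l : Fin α → ℤ) : R := DD q f α (fun j => l j + (j : ℕ))

theorem GG_succ (q : Rˣ) (f : ℤ → R) (α : ℕ) (l : Fin (α + 1) → ℤ) :
    GG q f (α + 1) l = ∑ e : Fin α → Bool, (-(q : R)) ^ cnt e *
      (f (l 0 + cnt e) * GG q f α (fun i => l i.succ + 1 - ((e i).toNat : ℤ))) := by
  rw [GG, DD]
  refine Finset.sum_congr rfl fun e _ => ?_
  simp only [GG, Fin.val_zero, Fin.val_succ]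
  push_cast
  rw [add_zero]
  congr 3
  funext i
  ring

theorem GG_adj {q : Rˣ} (hq : ∀ x : R, (q : R) * x = x * (q : R)) (f : ℤ → R)
    (hR : ∀ x y, E2 q f x y + E2 q f (y - 1) (x + 1) = 0) (hA : ∀ x, E2 q f x (x + 1) = 0)
    (α : ℕ) : ∀ (i : Fin α) (l : Fin (α + 1) → ℤ),
    GG q f (α + 1) l + GG q f (α + 1) (l ∘ Equiv.swap i.castSucc i.succ) = 0 ∧
    (l i.castSucc = l i.succ → GG q f (α + 1) l = 0) := by
  induction α with
  | zero => intro i; exact i.elim0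
  | succ α ih =>
    intro i l
    induction i using Fin.cases with
    | zero =>
      have s0 : (l ∘ Equiv.swap (Fin.castSucc (0 : Fin (α + 1))) (Fin.succ 0)) 0 = l 1 := by
        simp
      have s1 : (l ∘ Equiv.swap (Fin.castSucc (0 : Fin (α + 1))) (Fin.succ 0)) 1 = l 0 := by
        simp
      have s2 : ∀ j : Fin α, (l ∘ Equiv.swap (Fin.castSucc (0 : Fin (α + 1))) (Fin.succ 0)) j.succ.succ
          = l j.succ.succ := by
        intro j
        simp only [Function.comp]
        rw [Equiv.swap_apply_of_ne_of_ne]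
        · simp [Fin.ext_iff]
        · simp [Fin.ext_iff]
      constructor
      · simp only [GG]
        rw [DD_two hq, DD_two hq, Finset.sum_comm, ← Finset.sum_add_distrib]
        refine Finset.sum_eq_zero fun e _ => ?_
        rw [← Finset.sum_add_distrib]
        refine Finset.sum_eq_zero fun e' _ => ?_
        simp only [s0, s1, s2]
        have := hR (l 0 + ((0 : Fin (α + 2)) : ℕ) + cnt e') (l 1 + ((1 : Fin (α + 2)) : ℕ) + cnt e)
        simp only [Fin.val_zero, Fin.val_one, Nat.cast_zero, Nat.cast_one, add_zero] at this ⊢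
        rw [show l 1 + 1 + (cnt e : ℤ) - 1 = l 1 + cnt e by ring,
          show l 0 + (cnt e' : ℤ) + 1 = l 0 + 1 + cnt e' by ring] at this
        rw [show (fun i : Fin α => l i.succ.succ + ((i.succ.succ : Fin (α + 2)) : ℕ) - ((e' i).toNat : ℤ)
          - ((e i).toNat : ℤ)) = (fun i : Fin α => l i.succ.succ + ((i.succ.succ : Fin (α + 2)) : ℕ)
          - ((e i).toNat : ℤ) - ((e' i).toNat : ℤ)) by funext i; ring, add_comm (cnt e'),
          ← mul_add, ← add_mul, this]
        simp
      · intro hl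
        have hl : l 0 = l 1 := hl
        simp only [GG]
        rw [DD_two hq, ← Fintype.sum_prod_type']
        refine Finset.sum_ninvolution Prod.swap ?_ ?_ (by simp) (by simp)
        · rintro ⟨e, e'⟩
          simp only [Prod.swap_prod_mk]
          have := hR (l 0 + cnt e) (l 1 + 1 + cnt e')
          simp only [Fin.val_zero, Fin.val_one, Nat.cast_zero, Nat.cast_one, add_zero] at this ⊢
          rw [show l 1 + 1 + (cnt e' : ℤ) - 1 = l 0 + cnt e' by rw [hl]; ring,
            show l 0 + (cnt e : ℤ) + 1 = l 1 + 1 + cnt e by rw [hl]; ring] at this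
          rw [show (fun i : Fin α => l i.succ.succ + ((i.succ.succ : Fin (α + 2)) : ℕ) - ((e' i).toNat : ℤ)
            - ((e i).toNat : ℤ)) = (fun i : Fin α => l i.succ.succ + ((i.succ.succ : Fin (α + 2)) : ℕ)
            - ((e i).toNat : ℤ) - ((e' i).toNat : ℤ)) by funext i; ring, add_comm (cnt e'),
            ← mul_add, ← add_mul, this]
          simp
        · rintro ⟨e, e'⟩ h1 h2
          apply h1
          simp only [Prod.swap_prod_mk, Prod.mk.injEq] at h2
          rw [h2.1]
          have := hA (l 0 + cnt e)
          simp only [Fin.val_zero, Fin.val_one, Nat.cast_zero, Nat.cast_one, add_zero]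
          rw [show l 1 + 1 + (cnt e : ℤ) = l 0 + cnt e + 1 by rw [hl]; ring, this]
          simp
    | succ i =>
      set σ := Equiv.swap i.castSucc i.succ with hσ
      have t0 : (l ∘ Equiv.swap i.succ.castSucc i.succ.succ) 0 = l 0 := by
        simp only [Function.comp]
        rw [Equiv.swap_apply_of_ne_of_ne]
        · simp [Fin.ext_iff]
        · simp [Fin.ext_iff]
      have t1 : ∀ j : Fin (α + 1), (l ∘ Equiv.swap i.succ.castSucc i.succ.succ) j.succ = l (σ j).succ := by
        intro j
        simp only [Function.comp, hσ]
        rw [← Fin.succ_castSucc]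
        congr 1
        exact ((Fin.succ_injective (α + 1)).swap_apply _ _ _)
      have inv : ∀ e : Fin (α + 1) → Bool, (e ∘ σ) ∘ σ = e := by
        intro e; funext j; simp [σ]
      constructor
      · rw [GG_succ, GG_succ]
        have : ∑ e : Fin (α + 1) → Bool, (-(q : R)) ^ cnt e *
          (f ((l ∘ Equiv.swap i.succ.castSucc i.succ.succ) 0 + cnt e) * GG q f (α + 1)
          (fun j => (l ∘ Equiv.swap i.succ.castSucc i.succ.succ) j.succ + 1 - ((e j).toNat : ℤ))) =
          ∑ e : Fin (α + 1) → Bool, (-(q : R)) ^ cnt e *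
          (f (l 0 + cnt e) * GG q f (α + 1)
          ((fun j => l j.succ + 1 - ((e j).toNat : ℤ)) ∘ σ)) := by
          refine Finset.sum_nbij' (fun e => e ∘ σ) (fun e => e ∘ σ) (by simp) (by simp)
            (by simp [inv]) (by simp [inv]) ?_
          intro e _
          rw [cnt_comp, t0]
          congr 3
          funext j
          rw [t1]
          simp [σ]
        rw [this, ← Finset.sum_add_distrib]
        refine Finset.sum_eq_zero fun e _ => ?_
        rw [← mul_add, ← mul_add, (ih i _).1]
        simp
      · intro hl
        rw [GG_succ]
        have hl' : ∀ j, l (σ j).succ = l j.succ := by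
          intro j
          by_cases h1 : j = i.castSucc
          · subst h1
            simp only [σ, Equiv.swap_apply_left]
            rw [← hl, Fin.succ_castSucc]
          · by_cases h2 : j = i.succ
            · subst h2
              simp only [σ, Equiv.swap_apply_right]
              rw [← hl, Fin.succ_castSucc]
            · simp only [σ, Equiv.swap_apply_of_ne_of_ne h1 h2]
        refine Finset.sum_ninvolution (fun e => e ∘ σ) ?_ ?_ (by simp) inv
        · intro e
          rw [cnt_comp]
          have : (fun j : Fin (α + 1) => l j.succ + 1 - (((e ∘ σ) j).toNat : ℤ)) =
            (fun j => l j.succ + 1 - ((e j).toNat : ℤ)) ∘ σ := by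
            funext j; simp [hl']
          rw [this, ← mul_add, ← mul_add, (ih i _).1]
          simp
        · intro e h1 h2
          apply h1
          rw [(ih i _).2]
          · simp
          · have := congrFun h2 i.succ
            simp only [Function.comp, σ, Equiv.swap_apply_right] at this
            rw [this, Fin.succ_castSucc, hl]

theorem GG_perm {q : Rˣ} (hq : ∀ x : R, (q : R) * x = x * (q : R)) (f : ℤ → R)
    (hR : ∀ x y, E2 q f x y + E2 q f (y - 1) (x + 1) = 0) (hA : ∀ x, E2 q f x (x + 1) = 0)
    (α : ℕ) (σ : Equiv.Perm (Fin (α + 1))) : ∀ l : Fin (α + 1) → ℤ,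
    GG q f (α + 1) (l ∘ σ) = ((Equiv.Perm.sign σ : ℤ) : R) * GG q f (α + 1) l := by
  have hm : σ ∈ Submonoid.closure (Set.range fun i : Fin α ↦ Equiv.swap i.castSucc i.succ) := by
    rw [Equiv.Perm.mclosure_swap_castSucc_succ]; trivial
  induction hm using Submonoid.closure_induction with
  | mem x h =>
    obtain ⟨i, rfl⟩ := h
    intro l
    simp only
    rw [Equiv.Perm.sign_swap (by simp [Fin.ext_iff])]
    have := (GG_adj hq f hR hA α i l).1
    rw [add_comm] at this
    rw [eq_neg_of_add_eq_zero_left this]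
    simp
  | one => intro l; simp
  | mul x y _ _ h1 h2 =>
    intro l
    rw [Equiv.Perm.coe_mul, ← Function.comp_assoc, h2, h1, Equiv.Perm.sign_mul, ← mul_assoc]
    congr 1
    rw [mul_comm (Equiv.Perm.sign x)]
    push_cast
    rfl

theorem GG_zero {q : Rˣ} (hq : ∀ x : R, (q : R) * x = x * (q : R)) (f : ℤ → R)
    (hR : ∀ x y, E2 q f x y + E2 q f (y - 1) (x + 1) = 0) (hA : ∀ x, E2 q f x (x + 1) = 0)
    (α : ℕ) (l : Fin (α + 1) → ℤ) (i j : Fin (α + 1)) (hij : i < j) (h : l i = l j) :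
    GG q f (α + 1) l = 0 := by
  obtain ⟨i', rfl⟩ : ∃ i' : Fin α, i = i'.castSucc :=
    ⟨i.castPred (Fin.ne_last_of_lt hij), by simp⟩
  have h1 : GG q f (α + 1) (l ∘ Equiv.swap i'.succ j) = 0 := by
    apply (GG_adj hq f hR hA α i' _).2
    simp only [Function.comp, Equiv.swap_apply_left]
    rw [Equiv.swap_apply_of_ne_of_ne, h]
    · simp [Fin.ext_iff]
    · exact hij.ne
  rw [GG_perm hq f hR hA] at h1
  rcases Int.units_eq_one_or (Equiv.Perm.sign (Equiv.swap i'.succ j)) with h2 | h2 <;>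
    simpa [h2] using h1

end GGsec

theorem sum_bool_mono {A : Type*} [AddCommMonoid A] (α : ℕ) : ∀ (F : (Fin α → Bool) → A),
    (∀ e (i j : Fin α), (i : ℕ) + 1 = j → e i = false → e j = true → F e = 0) →
    ∑ e, F e = ∑ k ∈ Finset.range (α + 1), F (fun i => decide ((i : ℕ) < k)) := by
  induction α with
  | zero =>
    intro F _
    simp only [Finset.univ_unique, Finset.sum_singleton, zero_add, Finset.range_one]
    congr 1
    exact Subsingleton.elim _ _
  | succ α ih =>
    intro F h
    rw [sum_bool_cons, Finset.sum_add_distrib, ih (fun e => F (Fin.cons false e)),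
      ih (fun e => F (Fin.cons true e)), Finset.sum_range_succ' _ (α + 1), add_comm]
    · congr 1
      · refine Finset.sum_congr rfl fun k _ => ?_
        congr 1
        funext i
        induction i using Fin.cases <;> simp
      · rw [Finset.sum_range_succ', Finset.sum_eq_zero, zero_add]
        · congr 1
          funext i
          induction i using Fin.cases <;> simp
        · intro k hk
          rw [Finset.mem_range] at hk
          exact h _ 0 (Fin.succ ⟨0, by omega⟩) (by simp) (by simp)
            (by rw [Fin.cons_succ]; simp)
    · intro e i j hij h1 h2
      exact h _ i.succ j.succ (by simp [hij]) (by simpa using h1) (by simpa using h2)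
    · intro e i j hij h1 h2
      exact h _ i.succ j.succ (by simp [hij]) (by simpa using h1) (by simpa using h2)

theorem cnt_lt (α : ℕ) : ∀ k, k ≤ α → cnt (fun i : Fin α => decide ((i : ℕ) < k)) = k := by
  induction α with
  | zero => intro k h; simp [cnt]; omega
  | succ α ih =>
    intro k h
    cases k with
    | zero => simp [cnt]
    | succ k =>
      have := ih k (by omega)
      simp only [cnt] at this ⊢
      rw [Fin.sum_univ_succ]
      simp only [Fin.val_succ, Nat.add_lt_add_iff_right, this]
      simp; ring

namespace MSys
variable {R : Type*} [Ring R] {q : Rˣ} {r : ℕ} {M Mi : ℕ → ℤ → R}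

/-- partial Miura coefficients -/
def cc (M Mi : ℕ → ℤ → R) : ℕ → ℕ → ℤ → R
  | 0, 0, _ => 1
  | 0, _ + 1, _ => 0
  | _ + 1, 0, _ => 1
  | α + 1, m + 1, n => cc M Mi α (m + 1) (n + 1) + xv M Mi (α + 1) n * cc M Mi α m n

theorem cc_zero (α : ℕ) (n : ℤ) : cc M Mi α 0 n = 1 := by cases α <;> rfl

theorem cc_big (α : ℕ) : ∀ (m : ℕ) (n : ℤ), α < m → cc M Mi α m n = 0 := by
  induction α with
  | zero => intro m n h; obtain ⟨m, rfl⟩ := Nat.exists_eq_succ_of_ne_zero h.ne'; rfl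
  | succ α ih =>
    intro m n h
    obtain ⟨m, rfl⟩ := Nat.exists_eq_succ_of_ne_zero (by omega : m ≠ 0)
    rw [Nat.succ_eq_add_one, cc, ih _ _ (by omega), ih _ _ (by omega)]
    simp

theorem LL_eq_sum (α : ℕ) : ∀ (n : ℤ) (f : ℤ → R) (b : ℤ), LL M Mi α n f b =
    ∑ k ∈ Finset.range (α + 1), (-1 : R) ^ k * (cc M Mi α k n * f (b - k)) := by
  induction α with
  | zero => intro n f b; simp [LL, cc]
  | succ α ih =>
    intro n f b
    have h1 : LL M Mi α (n + 1) f b = ∑ k ∈ Finset.range (α + 2),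
        (-1 : R) ^ k * (cc M Mi α k (n + 1) * f (b - k)) := by
      rw [Finset.sum_range_succ _ (α + 1), cc_big _ _ _ (Nat.lt_succ_self α), ih]
      simp
    rw [LL_succ, h1, ih, Finset.sum_range_succ' _ (α + 1), Finset.sum_range_succ' _ (α + 1),
      Finset.mul_sum, cc_zero, cc_zero, add_sub_right_comm, ← Finset.sum_sub_distrib]
    congr 1
    refine Finset.sum_congr rfl fun k _ => ?_
    rw [cc, show b - 1 - (k : ℤ) = b - ((k + 1 : ℕ) : ℤ) by push_cast; ring]
    have hc : ∀ x : R, x * (-1) ^ k = (-1) ^ k * x := fun x =>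
      ((Commute.one_right x).neg_right.pow_right k).eq
    rw [← mul_assoc (xv M Mi (α + 1) n) ((-1) ^ k), hc, pow_succ]
    simp only [mul_neg, mul_one, neg_mul, add_mul, mul_add, mul_assoc, neg_add]
    rw [sub_eq_add_neg]

theorem cc_cons (H : MSys q r M Mi) (m : ℕ) (hm : m ≤ r + 1) (n n' : ℤ) :
    cc M Mi (r + 1) m n = cc M Mi (r + 1) m n' := by
  have h := H.LL_indep n n' (fun y => if y = -(m : ℤ) then 1 else 0) 0
  rw [LL_eq_sum, LL_eq_sum] at h
  have g : ∀ n, ∑ k ∈ Finset.range (r + 1 + 1), (-1 : R) ^ k * (cc M Mi (r + 1) k n *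
      (if (0 : ℤ) - k = -(m : ℤ) then (1 : R) else 0)) = (-1) ^ m * cc M Mi (r + 1) m n := by
    intro n
    rw [Finset.sum_eq_single m]
    · simp
    · intro k _ hk
      rw [if_neg (by omega)]; simp
    · intro h; exact absurd (Finset.mem_range.2 (by omega)) h
  rw [g, g] at h
  have hu : IsUnit ((-1 : R) ^ m) := (isUnit_one.neg).pow m
  exact hu.mul_left_cancel h

theorem hRE (H : MSys q r M Mi) : ∀ x y, E2 q (M 1) x y + E2 q (M 1) (y - 1) (x + 1) = 0 :=
  fun x y => H.RR x y

theorem hAE (H : MSys q r M Mi) : ∀ x, E2 q (M 1) x (x + 1) = 0 := fun x => H.D2_adj x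

theorem DD_eq_GG (f : ℤ → R) (α : ℕ) (ν : Fin α → ℤ) :
    DD q f α ν = GG q f α (fun j => ν j - (j : ℕ)) := by
  simp [GG]

theorem DD_zero_of (H : MSys q r M Mi) (α : ℕ) (ν : Fin α → ℤ) (i j : Fin α) (hij : i < j)
    (h : ν i - (i : ℕ) = ν j - (j : ℕ)) : DD q (M 1) α ν = 0 := by
  cases α with
  | zero => exact i.elim0
  | succ α =>
    rw [DD_eq_GG]
    exact GG_zero H.hq (M 1) H.hRE H.hAE α _ i j hij h

theorem DD_P (H : MSys q r M Mi) (α : ℕ) (ha : α ≤ r) (n : ℤ)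
    (hQ : ∀ m ≤ α, DD q (M 1) α (fun i => n + if (i : ℕ) < m then 1 else 0) =
      cc M Mi α m n * M α n) :
    DD q (M 1) (α + 1) (fun _ => n) = M (α + 1) n := by
  rw [DD_snoc H.hq, sum_bool_mono]
  · have : M (α + 1) n = LL M Mi α n (M 1) n * M α n := by
      rw [(H.LL_zero_M α (by omega) n).1, mul_assoc, H.hR α n (by omega), mul_one]
    rw [this, LL_eq_sum, Finset.sum_mul]
    refine Finset.sum_congr rfl fun k hk => ?_
    have hk : k ≤ α := by simpa [Nat.lt_succ_iff] using hk
    rw [cnt_lt _ _ hk]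
    have e : (fun i : Fin α => n + ((decide ((i : ℕ) < k)).toNat : ℤ)) =
        fun i : Fin α => n + if (i : ℕ) < k then 1 else 0 := by
      funext i
      by_cases h : (i : ℕ) < k <;> simp [h]
    rw [e, hQ k hk]
    have hc : M α n * M 1 (n - k) = ((q ^ (-(k : ℤ)) : Rˣ) : R) * (M 1 (n - k) * M α n) := by
      rcases Nat.eq_zero_or_pos α with h0 | h0
      · subst h0
        obtain rfl : k = 0 := by omega
        simp [H.hM0]
      · refine H.qc α 1 n (n - k) (by omega) (by omega) ?_ _ ?_
        · rw [show n - (k : ℤ) - n = -(k : ℤ) by ring, abs_neg, abs_of_nonneg (by omega),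
            abs_sub_comm, abs_of_nonneg (by push_cast; omega)]
          push_cast; omega
        · rw [min_eq_right (by push_cast; omega)]; push_cast; ring
    rw [mul_assoc (cc M Mi α k n), hc]
    rw [neg_pow, mul_assoc, mul_assoc ((-1) ^ k)]
    congr 1
    rw [← mul_assoc (cc M Mi α k n), ← qz_central H.hq, mul_assoc, ← mul_assoc ((q : R) ^ k)]
    rw [show (q : R) ^ k * ((q ^ (-(k : ℤ)) : Rˣ) : R) = 1 by
      rw [← Units.val_pow_eq_pow_val, ← Units.val_mul, ← zpow_natCast, ← zpow_add]; simp]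
    rw [one_mul, mul_assoc]
  · intro e i j hij h1 h2
    rw [H.DD_zero_of α _ i j (Fin.lt_def.2 (by omega))]
    · simp
    · simp only [h1, h2, Bool.toNat_true, Bool.toNat_false]
      push_cast
      omega

theorem DD_Q (H : MSys q r M Mi) (β : ℕ) (ha : β ≤ r) (n : ℤ)
    (hP : DD q (M 1) (β + 1) (fun _ => n) = M (β + 1) n) (m : ℕ) (hm : m ≤ β + 1) :
    DD q (M 1) (β + 1) (fun i => n + if (i : ℕ) < m then 1 else 0) =
      cc M Mi (β + 1) m n * M (β + 1) n := by
  cases m with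
  | zero => simpa [cc] using hP
  | succ m =>
    set ν : Fin β → ℤ := fun j => n + if (j : ℕ) < m then 1 else 0 with hν
    have h0 : LL M Mi (β + 1) n (fun a => DD q (M 1) (β + 1) (Fin.cons a ν)) (n + 1) = 0 := by
      simp only [DD, Fin.cons_zero, Fin.cons_succ]
      rw [LL_sum]
      refine Finset.sum_eq_zero fun e _ => ?_
      rw [LL_central _ (mq_central H.hq _), LL_mul_right, LL_shift]
      rw [(H.LL_zero_M (β + 1) (by omega) n).2]
      · simp
      · omega
      · have := cnt_le e; push_cast; omega
    rw [LL_eq_sum, ← Finset.sum_subset (s₁ := {0, m + 1})] at h0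
    · rw [Finset.sum_pair (by omega)] at h0
      have e1 : (Fin.cons (n + 1 - ((0 : ℕ) : ℤ)) ν : Fin (β + 1) → ℤ) =
          fun i : Fin (β + 1) => n + if (i : ℕ) < m + 1 then 1 else 0 := by
        funext i
        induction i using Fin.cases <;> simp [hν]
      have e2 : DD q (M 1) (β + 1) (Fin.cons (n + 1 - ((m + 1 : ℕ) : ℤ)) ν : Fin (β + 1) → ℤ) =
          (-1) ^ m * M (β + 1) n := by
        rw [← hP, DD_eq_GG, DD_eq_GG]
        have := GG_perm H.hq (M 1) H.hRE H.hAE β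
          (Fin.cycleRange (⟨m, by omega⟩ : Fin (β + 1))).symm (fun j => n - ((j : ℕ) : ℤ))
        rw [Equiv.Perm.sign_symm, Fin.sign_cycleRange] at this
        push_cast at this
        rw [← this]
        congr 1
        funext j
        induction j using Fin.cases with
        | zero =>
          simp only [Function.comp, Fin.cycleRange_symm_zero, Fin.cons_zero, Fin.val_zero]
          push_cast; ring
        | succ j =>
          simp only [Function.comp, Fin.cycleRange_symm_succ, Fin.cons_succ, Fin.val_succ, hν]
          by_cases h : (j : ℕ) < m
          · rw [Fin.succAbove_of_castSucc_lt _ _ (Fin.lt_def.2 (by simpa using h)), if_pos h]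
            simp
          · rw [Fin.succAbove_of_le_castSucc _ _ (Fin.le_def.2 (by simpa using h)), if_neg h]
            simp
      rw [e1, e2, cc_zero] at h0
      have hc : ∀ x : R, x * (-1) ^ m = (-1) ^ m * x := fun x =>
        ((Commute.one_right x).neg_right.pow_right m).eq
      rw [← mul_assoc (cc M Mi (β + 1) (m + 1) n), hc, pow_succ, mul_neg_one, neg_mul,
        ← mul_assoc ((-1) ^ m), ← mul_assoc ((-1) ^ m), ← pow_add, ← two_mul, pow_mul] at h0
      simp only [pow_zero, one_mul, neg_one_sq, one_pow] at h0
      rw [← sub_eq_add_neg, sub_eq_zero] at h0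
      exact h0
    · intro k hk
      simp only [Finset.mem_insert, Finset.mem_singleton] at hk
      rw [Finset.mem_range]; omega
    · intro k hk hk'
      simp only [Finset.mem_insert, Finset.mem_singleton, not_or] at hk'
      rw [Finset.mem_range] at hk
      have hz : DD q (M 1) (β + 1) (Fin.cons (n + 1 - (k : ℤ)) ν : Fin (β + 1) → ℤ) = 0 := by
        by_cases h : k ≤ m
        · refine H.DD_zero_of _ _ 0 (Fin.succ ⟨k - 1, by omega⟩) (Fin.succ_pos _) ?_
          simp only [Fin.cons_zero, Fin.cons_succ, hν, Fin.val_zero, Fin.val_succ]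
          rw [if_pos (by omega)]
          omega
        · refine H.DD_zero_of _ _ 0 (Fin.succ ⟨k - 2, by omega⟩) (Fin.succ_pos _) ?_
          simp only [Fin.cons_zero, Fin.cons_succ, hν, Fin.val_zero, Fin.val_succ]
          rw [if_neg (by omega)]
          omega
      rw [hz]; simp

theorem DD_PQ (H : MSys q r M Mi) (α : ℕ) : α ≤ r + 1 → ∀ (n : ℤ) (m : ℕ), m ≤ α →
    DD q (M 1) α (fun i => n + if (i : ℕ) < m then 1 else 0) = cc M Mi α m n * M α n := by
  induction α with
  | zero => intro _ n m hm; obtain rfl : m = 0 := by omega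
            simp [DD, cc, H.hM0]
  | succ α ih =>
    intro h n m hm
    exact H.DD_Q α (by omega) n (H.DD_P α (by omega) n (fun m hm => ih (by omega) n m hm)) m hm

end MSys

theorem sort_insert_max (S : Finset ℕ) (a : ℕ) (h : ∀ b ∈ S, b < a) :
    (insert a S).sort (· ≤ ·) = S.sort (· ≤ ·) ++ [a] := by
  have hn : (S.sort (· ≤ ·) ++ [a]).Nodup := by
    rw [List.nodup_append]
    refine ⟨Finset.sort_nodup _ _, by simp, ?_⟩
    intro x hx y hy
    simp only [Finset.mem_sort] at hx
    simp only [List.mem_singleton] at hy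
    have := h x hx
    omega
  have := (List.toFinset_sort (r := (· ≤ ·)) hn).2 (by
    rw [List.pairwise_append]
    refine ⟨Finset.pairwise_sort _ _, by simp, ?_⟩
    intro x hx y hy
    simp only [Finset.mem_sort] at hx
    simp only [List.mem_singleton] at hy
    have := h x hx
    omega)
  rw [← this]
  congr 1
  ext x
  simp [or_comm]

theorem miura_link {R : Type*} [Ring R] (M Mi : ℕ → ℤ → R) (α : ℕ) : ∀ (m : ℕ) (n : ℤ),
    ∑ S ∈ Finset.powersetCard m (Finset.Icc 1 α),
    (((S.sort (· ≤ ·)).reverse.zipIdx).map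
      (fun ji => xv M Mi ji.1 (n + ((α : ℤ) - (ji.1 : ℤ)) - (ji.2 : ℤ)))).prod =
    MSys.cc M Mi α m n := by
  induction α with
  | zero =>
    intro m n
    cases m with
    | zero => simp [MSys.cc]
    | succ m =>
      rw [Finset.powersetCard_eq_empty.2 (by simp)]
      simp [MSys.cc]
  | succ α ih =>
    intro m n
    cases m with
    | zero => simp [MSys.cc]
    | succ m =>
      have hI : Finset.Icc 1 (α + 1) = insert (α + 1) (Finset.Icc 1 α) := by
        ext x; simp only [Finset.mem_Icc, Finset.mem_insert]; omega
      have hn : α + 1 ∉ Finset.Icc 1 α := by simp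
      have hmax : ∀ k, ∀ S ∈ Finset.powersetCard k (Finset.Icc 1 α), ∀ b ∈ S, b < α + 1 := by
        intro k S hS b hb
        have := Finset.mem_Icc.1 ((Finset.mem_powersetCard.1 hS).1 hb)
        omega
      rw [hI, Finset.powersetCard_succ_insert hn, Finset.sum_union, Finset.sum_image, MSys.cc,
        ← ih, ← ih, Finset.mul_sum]
      · congr 1
        · refine Finset.sum_congr rfl fun S _ => ?_
          congr 2
          funext ji
          congr 1
          push_cast; ring
        · refine Finset.sum_congr rfl fun S hS => ?_
          rw [sort_insert_max S (α + 1) (hmax _ S hS), List.reverse_append, List.reverse_singleton,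
            List.singleton_append, List.zipIdx_cons', List.map_cons, List.prod_cons, List.map_map]
          congr 1
          · congr 1; push_cast; ring
          · congr 2
            funext ji
            simp only [Function.comp, Prod.map, id]
            congr 1
            push_cast; ring
      · intro S hS T hT h
        have h1 : α + 1 ∉ S := fun hc => lt_irrefl _ (hmax _ S hS _ hc)
        have h2 : α + 1 ∉ T := fun hc => lt_irrefl _ (hmax _ T hT _ hc)
        have : (insert (α + 1) S).erase (α + 1) = (insert (α + 1) T).erase (α + 1) := by
          rw [h]
        rwa [Finset.erase_insert h1, Finset.erase_insert h2] at this
      · rw [Finset.disjoint_left]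
        intro S hS hS'
        obtain ⟨T, _, rfl⟩ := Finset.mem_image.1 hS'
        exact lt_irrefl _ (hmax _ _ hS _ (Finset.mem_insert_self _ _))

/-- assemble a set of pairs -/
def asm {α : ℕ} (e : Fin α → Bool) (S : Finset (Fin α × Fin α)) :
    Finset (Fin (α + 1) × Fin (α + 1)) :=
  Finset.univ.filter fun p => (∃ b, p = (0, Fin.succ b) ∧ e b = true) ∨
    ∃ a b, p = (Fin.succ a, Fin.succ b) ∧ (a, b) ∈ S

section asmsec
variable {α : ℕ} (e : Fin α → Bool) (S : Finset (Fin α × Fin α))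

theorem asm_0s (b : Fin α) : (0, Fin.succ b) ∈ asm e S ↔ e b = true := by
  simp [asm, (Fin.succ_ne_zero _).symm]

theorem asm_ss (a b : Fin α) : (Fin.succ a, Fin.succ b) ∈ asm e S ↔ (a, b) ∈ S := by
  simp [asm]

theorem asm_00 (a : Fin (α + 1)) : (a, 0) ∉ asm e S := by
  simp [asm, (Fin.succ_ne_zero _).symm]

theorem qvExp_eq (i : Fin α) : qvExp α S i =
    (∑ a, if (a, i) ∈ S then (1 : ℤ) else 0) - ∑ b, if (i, b) ∈ S then (1 : ℤ) else 0 := by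
  rw [qvExp, Finset.sum_boole, Finset.sum_boole]
  congr 2
  · refine Finset.card_nbij' (fun p => p.1) (fun a => (a, i)) ?_ ?_ ?_ ?_
    · rintro ⟨a, b⟩ h; simp at h ⊢; rw [← h.2]; exact h.1
    · intro a h; simpa using h
    · rintro ⟨a, b⟩ h; simp at h ⊢; exact h.2.symm
    · intro a h; rfl
  · refine Finset.card_nbij' (fun p => p.2) (fun a => (i, a)) ?_ ?_ ?_ ?_
    · rintro ⟨a, b⟩ h; simp at h ⊢; rw [← h.2]; exact h.1
    · intro a h; simpa using h
    · rintro ⟨a, b⟩ h; simp at h ⊢; exact h.2.symm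
    · intro a h; rfl

theorem card_eq_ss : S.card = ∑ a, ∑ b, if (a, b) ∈ S then 1 else 0 := by
  rw [← Fintype.sum_prod_type' (f := fun a b => if (a, b) ∈ S then 1 else 0)]
  simp

theorem cnt_ite : cnt e = ∑ b, if e b = true then 1 else 0 := by
  refine Finset.sum_congr rfl fun b _ => ?_
  cases e b <;> rfl

theorem asm_card : (asm e S).card = cnt e + S.card := by
  rw [card_eq_ss, card_eq_ss S, cnt_ite, Fin.sum_univ_succ]
  simp only [Fin.sum_univ_succ, asm_00, asm_ss, asm_0s, if_false, zero_add]

theorem asm_exp_zero : qvExp (α + 1) (asm e S) 0 = -(cnt e : ℤ) := by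
  rw [qvExp_eq, cnt_ite, Fin.sum_univ_succ (n := α)]
  simp only [Fin.sum_univ_succ, asm_00, asm_ss, asm_0s, if_false, zero_add]
  simp

theorem asm_exp_succ (i : Fin α) :
    qvExp (α + 1) (asm e S) i.succ = ((e i).toNat : ℤ) + qvExp α S i := by
  rw [qvExp_eq, qvExp_eq]
  simp only [Fin.sum_univ_succ, asm_00, asm_ss, asm_0s, if_false, zero_add]
  cases e i <;> simp; ring

end asmsec

theorem powerset_link {R : Type*} [Ring R] (q : Rˣ) (hq : ∀ x : R, (q : R) * x = x * (q : R))
    (f : ℤ → R) (α : ℕ) :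
    ∀ ν : Fin α → ℤ, ∑ S ∈ (qvPairs α).powerset, (-(q : R)) ^ S.card *
      (List.ofFn fun i : Fin α => f (ν i - qvExp α S i)).prod = DD q f α ν := by
  induction α with
  | zero =>
    intro ν
    have : qvPairs 0 = ∅ := by ext ⟨a, b⟩; exact a.elim0
    simp [this, DD]
  | succ α ih =>
    intro ν
    rw [DD]
    simp only [← ih, Finset.mul_sum]
    rw [← Finset.sum_product']
    symm
    refine Finset.sum_nbij' (fun x => asm x.1 x.2)
      (fun T => (fun b => decide ((0, Fin.succ b) ∈ T),
        Finset.univ.filter fun p => (Fin.succ p.1, Fin.succ p.2) ∈ T)) ?_ ?_ ?_ ?_ ?_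
    · rintro ⟨e, S⟩ h
      simp only [Finset.mem_product, Finset.mem_univ, true_and, Finset.mem_powerset] at h ⊢
      intro p hp
      simp only [asm, Finset.mem_filter, Finset.mem_univ, true_and] at hp
      simp only [qvPairs, Finset.mem_filter, Finset.mem_univ, true_and]
      rcases hp with ⟨b, rfl, _⟩ | ⟨a, b, rfl, hab⟩
      · exact Fin.succ_pos b
      · have := h hab
        simp only [qvPairs, Finset.mem_filter, Finset.mem_univ, true_and] at this
        exact Fin.succ_lt_succ_iff.2 this
    · intro T hT
      simp only [Finset.mem_product, Finset.mem_univ, true_and, Finset.mem_powerset] at hT ⊢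
      intro p hp
      simp only [Finset.mem_filter, Finset.mem_univ, true_and] at hp
      have := hT hp
      simp only [qvPairs, Finset.mem_filter, Finset.mem_univ, true_and] at this ⊢
      exact Fin.succ_lt_succ_iff.1 this
    · rintro ⟨e, S⟩ h
      simp only [asm_0s, asm_ss]
      simp
    · intro T hT
      simp only [Finset.mem_powerset] at hT
      ext ⟨x, y⟩
      have hlt : (x, y) ∈ T → x < y := by
        intro h
        simpa [qvPairs] using hT h
      induction y using Fin.cases with
      | zero =>
        simp only [asm_00, false_iff]
        exact fun h => absurd (hlt h) (Fin.not_lt_zero _)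
      | succ y =>
        induction x using Fin.cases with
        | zero => rw [asm_0s]; simp
        | succ x => rw [asm_ss]; simp
    · rintro ⟨e, S⟩ h
      simp only
      rw [asm_card, List.ofFn_succ, List.prod_cons, asm_exp_zero, mq_left hq, ← mul_assoc, ← pow_add,
        sub_neg_eq_add]
      simp only [asm_exp_succ, sub_sub]

theorem quantum_Q_conserved_quantities_as_quantum_determinants
    {R : Type*} [Ring R] (q A Δ : Rˣ)
    (hq : ∀ x : R, (q : R) * x = x * (q : R))
    (r : ℕ) (hr : 1 ≤ r)
    (M Mi : ℕ → ℤ → R)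
    (hM0 : ∀ n : ℤ, M 0 n = 1)
    (hMtop : ∀ n : ℤ, M (r + 2) n = 0)
    (hMiL : ∀ (α : ℕ) (n : ℤ), α ≤ r + 1 → M α n * Mi α n = 1)
    (hMiR : ∀ (α : ℕ) (n : ℤ), α ≤ r + 1 → Mi α n * M α n = 1)
    (hMsys : ∀ (α : ℕ) (n : ℤ), 1 ≤ α → α ≤ r + 1 →
      (q : R) ^ α * M α (n + 1) * M α (n - 1) = M α n ^ 2 - M (α + 1) n * M (α - 1) n)
    (hcom : ∀ (α β ε : ℕ) (n : ℤ), ε ≤ 1 → α ≤ r + 1 → β ≤ r + 1 →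
      M α n * M β (n + (ε : ℤ)) = (q : R) ^ (ε * min α β) * M β (n + (ε : ℤ)) * M α n)
    (hAΔ : ∀ n : ℤ, M (r + 1) n = ((A ^ n : Rˣ) : R) * (Δ : R))
    (hΔM : ∀ (α : ℕ) (n : ℤ), 1 ≤ α → α ≤ r + 1 →
      (Δ : R) * M α n = ((q ^ ((α : ℤ) * n) : Rˣ) : R) * M α n * (Δ : R))
    (hAM : ∀ (α : ℕ) (n : ℤ), 1 ≤ α → α ≤ r + 1 →
      (A : R) * M α n = ((q ^ (-(α : ℤ)) : Rˣ) : R) * M α n * (A : R))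
    (hΔA : (Δ : R) * (A : R) = (q : R) ^ (r + 1) * (A : R) * (Δ : R))
    (hext : ∀ (α β : ℕ) (n p : ℤ), α ≤ r + 1 → β ≤ r + 1 →
      |p| ≤ |(β : ℤ) - (α : ℤ)| + 1 →
      M α n * M β (n + p) = ((q ^ (p * ((min α β : ℕ) : ℤ)) : Rˣ) : R) * M β (n + p) * M α n) :
    ∀ m : ℕ, m ≤ r + 1 →
      (∀ n : ℤ,
        CMiura M Mi r m 0 * M (r + 1) n
          = ∑ S ∈ (qvPairs (r + 1)).powerset,
              (-(q : R)) ^ S.card *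
                (List.ofFn fun i : Fin (r + 1) =>
                  M 1 (n + (if (i : ℕ) < m then 1 else 0) - qvExp (r + 1) S i)).prod)
      ∧ CMiura M Mi r m 0
          = (∑ S ∈ (qvPairs (r + 1)).powerset,
              (-(q : R)) ^ S.card *
                (List.ofFn fun i : Fin (r + 1) =>
                  M 1 ((if (i : ℕ) < m then 1 else 0) - qvExp (r + 1) S i)).prod)
              * ((Δ⁻¹ : Rˣ) : R) := by
  have H : MSys q r M Mi := ⟨hq, hr, hM0, hMtop, hMiL, hMiR, hMsys, hext⟩
  intro m hm
  have key : ∀ n : ℤ,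
        CMiura M Mi r m 0 * M (r + 1) n
          = ∑ S ∈ (qvPairs (r + 1)).powerset,
              (-(q : R)) ^ S.card *
                (List.ofFn fun i : Fin (r + 1) =>
                  M 1 (n + (if (i : ℕ) < m then 1 else 0) - qvExp (r + 1) S i)).prod := by
    intro n
    rw [powerset_link q hq (M 1) (r + 1) (fun i => n + if (i : ℕ) < m then 1 else 0),
      H.DD_PQ (r + 1) le_rfl n m hm, H.cc_cons m hm n 0, ← miura_link, CMiura]
    push_cast
    rfl
  refine ⟨key, ?_⟩
  have h0 := key 0
  simp only [zero_add] at h0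
  rw [← h0, hAΔ 0]
  simp
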